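/- arXiv:0706.0494 — 5 statements merged into one kernel-verified Lean document; each statement's English description precedes it below -/
import Mathlib

section
/- Let R = ⊕_{i≥0} R_i be a commutative ℕ-graded ring that is an integral domain and a graded ℂ-algebra, and let k be a positive integer. Then R is a finitely generated ℂ-algebra if and only if the truncation R_(k) := ⊕_{i≥0} R_{ki} is a finitely generated ℂ-algebra. -/
/-!
Let `S` be the truncation of the graded ring `A`. Then `A` is integral over `S`, because the `k`-th
power of a homogeneous element lies in `S`. If `A` is a finitely generated algebra, it is therefore
a finite `S`-module, and Artin–Tate applies to `S`.

Conversely, if `S` is finitely generated, hence Noetherian, it suffices to see that the part `M` of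
`A` in each of the `k` residue classes of degrees is a finite `S`-module. A product of `k` elements
of `M` lies in `S`. By Noetherianity finitely many powers `y₁ ^ k, …, yₘ ^ k` generate the
`S`-module spanned by all `y ^ k` with `y ∈ M`. If `yⱼ ^ (k - 1) * x = 0` for all `j`, then this
module annihilates `x`, so `x ^ k * x = 0` and `x = 0`. Hence `x ↦ (yⱼ ^ (k - 1) * x)ⱼ` embeds `M`
into a finite power of `S`.

All this uses of the map `ℕ → ℤ/k` is that it is a homomorphism `φ` from the grading monoid to a
finite group `G`; the exponent `k` is the order of `G`.
-/

lemma fg_subalgebra_of_isIntegral {R A : Type*} [CommRing R] [IsNoetherianRing R] [CommRing A]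
    [Algebra R A] [Algebra.FiniteType R A] (S : Subalgebra R A) [Algebra.IsIntegral S A] :
    S.FG := by
  have : Algebra.FiniteType S A := .of_restrictScalars_finiteType R S A
  have : Module.Finite S A := Algebra.IsIntegral.finite
  rw [← S.fg_top]
  exact fg_of_fg_of_fg R S A Algebra.FiniteType.out Module.Finite.fg_top Subtype.val_injective

section Reduced

variable {S A : Type*} [CommRing S] [CommRing A] [IsReduced A] [Algebra S A] {n : ℕ}

lemma exists_finset_forall_pow_mul_eq_zero_imp (hn : n ≠ 0) {s : Set A}
    (hs : (Submodule.span S ((· ^ n) '' s)).FG) :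
    ∃ t : Finset A, ↑t ⊆ s ∧ ∀ x ∈ s, (∀ y ∈ t, y ^ (n - 1) * x = 0) → x = 0 := by
  classical
  obtain ⟨u, hu, hspan⟩ := Submodule.fg_span_iff_fg_span_finset_subset _ |>.mp hs
  obtain ⟨t, hts, rfl⟩ := Finset.subset_set_image_iff.mp hu
  refine ⟨t, hts, fun x hx hzero ↦ ?_⟩
  have hker : Submodule.span S ((· ^ n) '' s) ≤ LinearMap.ker (LinearMap.mulRight S x) := by
    rw [hspan, Submodule.span_le, Finset.coe_image, Set.image_subset_iff]
    intro y hy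
    change y ^ n * x = 0
    rw [← mul_pow_sub_one hn, mul_assoc, hzero y hy, mul_zero]
  have hpow : x ^ n * x = 0 := hker (Submodule.subset_span (Set.mem_image_of_mem _ hx))
  exact eq_zero_of_pow_eq_zero ((pow_succ x n).trans hpow)

lemma submodule_fg_of_pow_le_one [IsNoetherianRing S] (hn : n ≠ 0) {M : Submodule S A}
    (hM : M ^ n ≤ 1) : M.FG := by
  have hone : IsNoetherian S (1 : Submodule S A) := by
    rw [Submodule.one_eq_range]
    infer_instance
  have hpowers : Submodule.span S ((· ^ n) '' (M : Set A)) ≤ 1 := by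
    rw [Submodule.span_le, Set.image_subset_iff]
    exact fun x hx ↦ hM (Submodule.pow_mem_pow M hx n)
  obtain ⟨t, htM, ht⟩ :=
    exists_finset_forall_pow_mul_eq_zero_imp hn (isNoetherian_submodule.mp hone _ hpowers)
  have hmul (y : t) (x : M) : (y : A) ^ (n - 1) * x ∈ (1 : Submodule S A) := by
    refine hM ?_
    rw [← pow_sub_one_mul hn M]
    exact Submodule.mul_mem_mul (Submodule.pow_mem_pow M (htM y.2) _) x.2
  let f : M →ₗ[S] t → (1 : Submodule S A) :=
    LinearMap.pi fun y ↦
      (LinearMap.mulLeft S ((y : A) ^ (n - 1)) ∘ₗ M.subtype).codRestrict 1 (hmul y)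
  have hf : Function.Injective f := by
    refine (injective_iff_map_eq_zero f).mpr fun x hx ↦ Subtype.ext (ht x x.2 fun y hy ↦ ?_)
    exact congrArg Subtype.val (congrFun hx ⟨y, hy⟩)
  exact Submodule.fg_top M |>.mp (fg_of_injective f hf)

end Reduced

section Coarsening

variable {ι G R A : Type*} [AddMonoid ι] [AddMonoid G] [CommRing R] [CommRing A] [Algebra R A]

/-- The degree `g` part of the coarsening of the grading `𝒜` along the map of degrees `φ`, as a
module over a subalgebra `S`. It is the sum of the pieces `𝒜 i` with `φ i = g` when `S` is the part
of degree `0`; for an arbitrary `S` it is the `S`-module generated by these pieces. -/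
def coarsenedPart (𝒜 : ι → Submodule R A) (φ : ι →+ G) (S : Subalgebra R A) (g : G) :
    Submodule S A :=
  Submodule.span S {a | ∃ i, φ i = g ∧ a ∈ 𝒜 i}

variable {𝒜 : ι → Submodule R A} {φ : ι →+ G} {S : Subalgebra R A}

lemma coarsenedPart_zero_le_one (hS : ∀ i, φ i = 0 → 𝒜 i ≤ Subalgebra.toSubmodule S) :
    coarsenedPart 𝒜 φ S 0 ≤ 1 := by
  refine Submodule.span_le.mpr ?_
  rintro a ⟨i, hi, ha⟩
  exact Submodule.mem_one.mpr ⟨⟨a, hS i hi ha⟩, rfl⟩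

lemma coarsenedPart_mul_le [SetLike.GradedMonoid 𝒜] (g h : G) :
    coarsenedPart 𝒜 φ S g * coarsenedPart 𝒜 φ S h ≤ coarsenedPart 𝒜 φ S (g + h) := by
  rw [coarsenedPart, coarsenedPart, Submodule.span_mul_span]
  refine Submodule.span_mono ?_
  rintro _ ⟨a, ⟨i, rfl, ha⟩, b, ⟨j, rfl, hb⟩, rfl⟩
  exact ⟨i + j, map_add φ i j, SetLike.mul_mem_graded ha hb⟩

lemma coarsenedPart_pow_le [SetLike.GradedMonoid 𝒜] (g : G) (n : ℕ) :
    coarsenedPart 𝒜 φ S g ^ n ≤ coarsenedPart 𝒜 φ S (n • g) := by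
  induction n with
  | zero =>
    rw [pow_zero, zero_nsmul, Submodule.one_le]
    exact Submodule.subset_span ⟨0, map_zero φ, SetLike.one_mem_graded 𝒜⟩
  | succ n ih =>
    rw [pow_succ, succ_nsmul]
    exact (mul_le_mul_left ih _).trans (coarsenedPart_mul_le _ _)

variable (𝒜 φ S) in
lemma iSup_coarsenedPart [DecidableEq ι] [DirectSum.Decomposition 𝒜] :
    ⨆ g, coarsenedPart 𝒜 φ S g = ⊤ := by
  refine eq_top_iff.mpr fun a _ ↦ ?_
  induction a using DirectSum.Decomposition.inductionOn 𝒜 with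
  | zero => exact zero_mem _
  | @homogeneous i a =>
    exact Submodule.mem_iSup_of_mem (φ i) (Submodule.subset_span ⟨i, rfl, a.2⟩)
  | add a b ha hb => exact add_mem (ha trivial) (hb trivial)

end Coarsening

section FiniteCoarsening

variable {ι G R A : Type*} [AddMonoid ι] [AddGroup G] [Finite G] [CommRing R] [CommRing A]
  [Algebra R A] {𝒜 : ι → Submodule R A} {φ : ι →+ G} {S : Subalgebra R A}

lemma coarsenedPart_fg [SetLike.GradedMonoid 𝒜] [IsReduced A] [IsNoetherianRing S]
    (hS : ∀ i, φ i = 0 → 𝒜 i ≤ Subalgebra.toSubmodule S) (g : G) :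
    (coarsenedPart 𝒜 φ S g).FG := by
  refine submodule_fg_of_pow_le_one (n := Nat.card G) Nat.card_pos.ne' ?_
  calc coarsenedPart 𝒜 φ S g ^ Nat.card G
      ≤ coarsenedPart 𝒜 φ S (Nat.card G • g) := coarsenedPart_pow_le g _
    _ = coarsenedPart 𝒜 φ S 0 := by rw [card_nsmul_eq_zero']
    _ ≤ 1 := coarsenedPart_zero_le_one hS

variable [DecidableEq ι] [GradedAlgebra 𝒜]

lemma finite_of_gradedPiece_le [IsReduced A] [IsNoetherianRing S]
    (hS : ∀ i, φ i = 0 → 𝒜 i ≤ Subalgebra.toSubmodule S) : Module.Finite S A :=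
  ⟨iSup_coarsenedPart 𝒜 φ S ▸ Submodule.fg_iSup _ (coarsenedPart_fg hS)⟩

lemma isIntegral_of_gradedPiece_le (hS : ∀ i, φ i = 0 → 𝒜 i ≤ Subalgebra.toSubmodule S) :
    Algebra.IsIntegral S A := by
  refine ⟨fun a ↦ ?_⟩
  induction a using DirectSum.Decomposition.inductionOn 𝒜 with
  | zero => exact isIntegral_zero
  | @homogeneous i a =>
    have hdeg : φ (Nat.card G • i) = 0 := by rw [map_nsmul, card_nsmul_eq_zero']
    have hpow : (a : A) ^ Nat.card G ∈ S := hS _ hdeg (SetLike.pow_mem_graded _ a.2)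
    exact .of_pow Nat.card_pos (isIntegral_algebraMap (x := (⟨_, hpow⟩ : S)))
  | add a b ha hb => exact ha.add hb

theorem truncation_finitelyGenerated_iff_general [IsNoetherianRing R] [IsReduced A]
    (hS : ∀ i, φ i = 0 → 𝒜 i ≤ Subalgebra.toSubmodule S) :
    Algebra.FiniteType R A ↔ S.FG := by
  refine ⟨fun _ ↦ ?_, fun hfg ↦ ?_⟩
  · have := isIntegral_of_gradedPiece_le hS
    exact fg_subalgebra_of_isIntegral S
  · have : Algebra.FiniteType R S := S.fg_iff_finiteType.mp hfg
    have : IsNoetherianRing S := Algebra.FiniteType.isNoetherianRing R S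
    have : Module.Finite S A := finite_of_gradedPiece_le hS
    exact Algebra.FiniteType.trans (S := S) inferInstance inferInstance

end FiniteCoarsening

lemma gradedPiece_le_iSup_of_natCast_eq_zero {R A : Type*} [Semiring R] [AddCommMonoid A]
    [Module R A] (𝒜 : ℕ → Submodule R A) {k n : ℕ} (hn : (n : ZMod k) = 0) :
    𝒜 n ≤ ⨆ i, 𝒜 (k * i) := by
  obtain ⟨i, rfl⟩ := (ZMod.natCast_eq_zero_iff n k).mp hn
  exact le_iSup (fun i ↦ 𝒜 (k * i)) i

/-- Let `R = ⊕_{i ≥ 0} R_i` be a commutative ℕ-graded ring which is an integral domain and a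
graded ℂ-algebra, and let `k` be a positive integer.  Then `R` is a finitely generated
ℂ-algebra if and only if the truncation (Veronese subring) `R_(k) = ⊕_{i ≥ 0} R_{ki}`
is a finitely generated ℂ-algebra.

Here the truncation is formalized as a subalgebra `S` of `R` whose underlying submodule
is the (internal direct) sum `⨆ i, 𝒜 (k * i)` of the graded pieces of degree divisible
by `k`, and `S.FG` says that `S` is finitely generated as a ℂ-algebra. -/
theorem truncation_finitelyGenerated_iff
    {A : Type*} [CommRing A] [IsDomain A] [Algebra ℂ A]
    (𝒜 : ℕ → Submodule ℂ A) [GradedAlgebra 𝒜]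
    (k : ℕ) (hk : 0 < k)
    (S : Subalgebra ℂ A)
    (hS : Subalgebra.toSubmodule S = ⨆ i : ℕ, 𝒜 (k * i)) :
    Algebra.FiniteType ℂ A ↔ S.FG := by
  have : NeZero k := ⟨hk.ne'⟩
  exact truncation_finitelyGenerated_iff_general (φ := Nat.castAddMonoidHom (ZMod k)) fun _ hn ↦
    hS ▸ gradedPiece_le_iSup_of_natCast_eq_zero 𝒜 hn
end

section
/- Let R = ⊕_{i≥0} R_i be a commutative ℕ-graded ring that is a graded ℂ-algebra (no domain hypothesis), and let k be a positive integer. If R is a finitely generated ℂ-algebra, then the truncation R_(k) := ⊕_{i≥0} R_{ki} is a finitely generated ℂ-algebra. -/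
/-!
The `k`-th power of a homogeneous element of degree `i` lies in degree `k • i`, hence in the
truncation, so homogeneous elements, and therefore all of `A`, are integral over the truncation `S`.
As `A` is also an algebra of finite type over `S`, it is a finite `S`-module, and the Artin–Tate
lemma for `ℂ ⊆ S ⊆ A` shows that `S` is finitely generated over `ℂ`.
-/

theorem isIntegral_of_forall_mem_nsmul_isIntegral {ι σ B A : Type*} [DecidableEq ι] [AddMonoid ι]
    [CommRing B] [CommRing A] [Algebra B A] [SetLike σ A] [AddSubmonoidClass σ A]
    (𝒜 : ι → σ) [GradedRing 𝒜] {k : ℕ} (hk : 0 < k)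
    (h : ∀ i, ∀ a ∈ 𝒜 (k • i), IsIntegral B a) :
    Algebra.IsIntegral B A where
  isIntegral a := by
    induction a using DirectSum.Decomposition.inductionOn 𝒜 with
    | zero => exact isIntegral_zero
    | homogeneous a => exact .of_pow hk (h _ _ (SetLike.pow_mem_graded k a.2))
    | add a b ha hb => exact ha.add hb

theorem finiteType_of_isIntegral_of_injective (R B A : Type*) [CommRing R] [IsNoetherianRing R]
    [CommRing B] [CommRing A] [Algebra R B] [Algebra B A] [Algebra R A] [IsScalarTower R B A]
    [Algebra.FiniteType R A] [Algebra.IsIntegral B A]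
    (hinj : Function.Injective (algebraMap B A)) :
    Algebra.FiniteType R B := by
  have : Algebra.FiniteType B A := .of_restrictScalars_finiteType R B A
  have : Module.Finite B A := Algebra.IsIntegral.finite
  exact ⟨fg_of_fg_of_fg R B A Algebra.FiniteType.out Module.Finite.fg_top hinj⟩

theorem truncation_finitelyGenerated_of_finitelyGenerated_general
    {ι R A : Type*} [DecidableEq ι] [AddMonoid ι] [CommRing R] [IsNoetherianRing R]
    [CommRing A] [Algebra R A] [Algebra.FiniteType R A]
    (𝒜 : ι → Submodule R A) [GradedAlgebra 𝒜] {k : ℕ} (hk : 0 < k)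
    (S : Subalgebra R A) (hS : ∀ i, 𝒜 (k • i) ≤ Subalgebra.toSubmodule S) :
    S.FG := by
  have : Algebra.IsIntegral S A :=
    isIntegral_of_forall_mem_nsmul_isIntegral 𝒜 hk fun i a ha ↦
      isIntegral_algebraMap (x := (⟨a, hS i ha⟩ : S))
  have : Algebra.FiniteType R S :=
    finiteType_of_isIntegral_of_injective R S A Subtype.val_injective
  exact S.fg_top.mp this.out

/-- Let `R = ⊕_{i ≥ 0} R_i` be a commutative ℕ-graded ring which is a graded ℂ-algebra
(no domain hypothesis), and let `k` be a positive integer.  If `R` is a finitely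
generated ℂ-algebra, then the truncation (Veronese subring) `R_(k) = ⊕_{i ≥ 0} R_{ki}`
is a finitely generated ℂ-algebra.

The truncation is formalized as a subalgebra `S` of `R` whose underlying submodule is
the (internal direct) sum `⨆ i, 𝒜 (k * i)` of the graded pieces of degree divisible
by `k`, and `S.FG` says that `S` is finitely generated as a ℂ-algebra. -/
theorem truncation_finitelyGenerated_of_finitelyGenerated
    {A : Type*} [CommRing A] [Algebra ℂ A]
    (𝒜 : ℕ → Submodule ℂ A) [GradedAlgebra 𝒜]
    (k : ℕ) (hk : 0 < k)
    (S : Subalgebra ℂ A)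
    (hS : Subalgebra.toSubmodule S = ⨆ i : ℕ, 𝒜 (k * i))
    (hfg : Algebra.FiniteType ℂ A) :
    S.FG :=
  truncation_finitelyGenerated_of_finitelyGenerated_general 𝒜 hk S fun i ↦
    hS ▸ le_iSup (fun i ↦ 𝒜 (k * i)) i
end

section
/- Let m : ℕ → ℕ be a superadditive sequence (m_{i+j} ≥ m_i + m_j for all i, j ≥ 1), set d_i := m_i/i ∈ ℝ for i ≥ 1, assume the set {d_i : i ≥ 1} is bounded above, and let d := sup_{i≥1} d_i. Suppose there exists a real number b < 1 such that ⌈ j·d_i − b ⌉ ≤ j·d_j for all integers i ≥ j ≥ 1 (the saturation condition). Then d is a rational number. -/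
/-!
If the supremum `d` is irrational, it is not one of the rational numbers `d_i`, so it is still the
supremum of every tail of `(d_i)`. Letting `d_i` approach `d` in the saturation condition gives
`j * d - b ≤ m_j ≤ j * d`, so the fractional part of `j * d` is at most `b < 1` for every `j ≥ 1`.
This contradicts the density in `[0, 1]` of the fractional parts of the multiples of `d`.
-/

open Filter Set

theorem exists_fract_natCast_mul_mem_Ioo {x a c : ℝ} (hx : Irrational x) (ha : 0 ≤ a)
    (hac : a < c) (hc : c ≤ 1) : ∃ n : ℕ, Int.fract (n * x) ∈ Ioo a c := by
  have hdense : DenseRange (· • (x : UnitAddCircle) : ℕ → UnitAddCircle) :=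
    denseRange_zsmul_iff_nsmul.1 <| AddCircle.denseRange_zsmul_coe_iff.2 (by simpa using hx)
  obtain ⟨n, y, hy, hyn⟩ := hdense.exists_mem_open
    (QuotientAddGroup.isOpenMap_coe _ isOpen_Ioo) ((nonempty_Ioo.2 hac).image _)
  have hy01 : y ∈ Ico (0 : ℝ) (0 + 1) := ⟨ha.trans hy.1.le, by linarith [hy.2]⟩
  have hfract : Int.fract (n * x) ∈ Ico (0 : ℝ) (0 + 1) :=
    ⟨Int.fract_nonneg _, by simpa using Int.fract_lt_one (n * x)⟩
  have heq : ((Int.fract (n * x) : ℝ) : UnitAddCircle) = y := by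
    rw [AddCircle.coe_fract, ← nsmul_eq_mul, AddCircle.coe_nsmul]
    exact hyn.symm
  exact ⟨n, ((AddCircle.coe_eq_coe_iff_of_mem_Ico hfract hy01).1 heq).symm ▸ hy⟩

theorem exists_pos_lt_fract_natCast_mul {x b : ℝ} (hx : Irrational x) (hb : b < 1) :
    ∃ n : ℕ, 0 < n ∧ b < Int.fract (n * x) := by
  obtain ⟨n, hn, -⟩ := exists_fract_natCast_mul_mem_Ioo hx (le_max_right b 0)
    (max_lt hb one_pos) le_rfl
  refine ⟨n, Nat.pos_of_ne_zero ?_, (le_max_left b 0).trans_lt hn⟩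
  rintro rfl
  simp at hn

theorem le_of_isLUB_image_of_eventually_cofinite_le {ι α : Type*} [LinearOrder α] {u : ι → α}
    {s : Set ι} {a b : α} (ha : IsLUB (u '' s) a) (hmem : a ∉ u '' s)
    (hb : ∀ᶠ i in cofinite, u i ≤ b) : a ≤ b := by
  by_contra! hba
  have hfin : {i ∈ s | b < u i}.Finite :=
    (eventually_cofinite.1 hb).subset fun _ hi ↦ not_le.2 hi.2
  obtain ⟨_, ⟨k, hk, rfl⟩, hbk, -⟩ := ha.exists_between hba
  obtain ⟨i, ⟨hi, hbi⟩, hmax⟩ := hfin.exists_maximalFor u _ ⟨k, hk, hbk⟩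
  have hia : u i < a := (ha.1 ⟨i, hi, rfl⟩).lt_of_ne fun h ↦ hmem ⟨i, hi, h⟩
  obtain ⟨_, ⟨l, hl, rfl⟩, hil, -⟩ := ha.exists_between hia
  exact hil.not_ge (hmax ⟨hl, hbi.trans hil⟩ hil.le)

theorem fract_le_sub_intCast {R : Type*} [Ring R] [LinearOrder R] [IsOrderedRing R]
    [FloorRing R] {x : R} {n : ℤ} (h : n ≤ x) : Int.fract x ≤ x - n :=
  sub_le_sub_left (Int.cast_le.2 (Int.le_floor.2 h)) x

theorem sup_rational_of_saturated_general {m : ℕ → ℤ} {d b : ℝ}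
    (hd : IsLUB ((fun i : ℕ ↦ (m i : ℝ) / i) '' Ici 1) d) (hb : b < 1)
    (hsat : ∀ j : ℕ, 1 ≤ j → ∀ᶠ i : ℕ in atTop,
      ((⌈(j : ℝ) * ((m i : ℝ) / (i : ℝ)) - b⌉ : ℤ) : ℝ) ≤ (j : ℝ) * ((m j : ℝ) / (j : ℝ))) :
    ¬ Irrational d := by
  intro hirr
  obtain ⟨j, hj, hfract⟩ := exists_pos_lt_fract_natCast_mul hirr hb
  have hj0 : (0 : ℝ) < j := Nat.cast_pos.2 hj
  have hnot_attained : d ∉ (fun i : ℕ ↦ (m i : ℝ) / i) '' Ici 1 := by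
    rintro ⟨i, -, hi⟩
    exact hirr ⟨m i / i, by simpa using hi⟩
  have hupper : (m j : ℝ) ≤ j * d := (div_le_iff₀' hj0).1 (hd.1 ⟨j, hj, rfl⟩)
  have hlower : d ≤ (m j + b) / j := by
    refine le_of_isLUB_image_of_eventually_cofinite_le hd hnot_attained ?_
    rw [Nat.cofinite_eq_atTop]
    filter_upwards [hsat j hj] with i hi
    rw [mul_div_cancel₀ _ hj0.ne'] at hi
    rw [le_div_iff₀' hj0]
    linarith [Int.le_ceil ((j : ℝ) * (m i / i) - b)]
  rw [le_div_iff₀' hj0] at hlower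
  linarith [fract_le_sub_intCast hupper]

/-- Shokurov: the limit of an a-saturated adjoint algebra on an affine
curve is rational.
Let `m : ℕ → ℕ` be superadditive (`m i + m j ≤ m (i+j)` for `i, j ≥ 1`), set
`d_i := m_i / i ∈ ℝ` for `i ≥ 1`, assume `{d_i : i ≥ 1}` is bounded above, and let
`d := sup_{i ≥ 1} d_i`.  Suppose there is a real number `b < 1` such that
`⌈ j·d_i − b ⌉ ≤ j·d_j` for all integers `i ≥ j ≥ 1` (the saturation condition).
Then `d` is a rational number. -/
theorem sup_rational_of_saturated
    (m : ℕ → ℕ)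
    (hsuper : ∀ i j : ℕ, 1 ≤ i → 1 ≤ j → m i + m j ≤ m (i + j))
    (hbdd : BddAbove {x : ℝ | ∃ i : ℕ, 1 ≤ i ∧ x = (m i : ℝ) / (i : ℝ)})
    (d : ℝ) (hd : d = sSup {x : ℝ | ∃ i : ℕ, 1 ≤ i ∧ x = (m i : ℝ) / (i : ℝ)})
    (b : ℝ) (hb : b < 1)
    (hsat : ∀ i j : ℕ, 1 ≤ j → j ≤ i →
      ((⌈(j : ℝ) * ((m i : ℝ) / (i : ℝ)) - b⌉ : ℤ) : ℝ) ≤ (j : ℝ) * ((m j : ℝ) / (j : ℝ))) :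
    ¬ Irrational d := by
  have hlub : IsLUB {x : ℝ | ∃ i : ℕ, 1 ≤ i ∧ x = (m i : ℝ) / (i : ℝ)} d :=
    hd ▸ isLUB_csSup ⟨_, 1, le_rfl, rfl⟩ hbdd
  exact sup_rational_of_saturated_general (m := fun i ↦ m i)
    (by simpa [image, eq_comm] using hlub) hb fun j hj ↦
      (eventually_ge_atTop j).mono fun i hi ↦ by simpa only [Int.cast_natCast] using hsat i j hj hi
end

section
/- Let m : ℕ → ℕ be a superadditive sequence (m_{i+j} ≥ m_i + m_j for all i, j ≥ 1), set d_i := m_i/i ∈ ℝ for i ≥ 1, assume the set {d_i : i ≥ 1} is bounded above, and let d := sup_{i≥1} d_i. Suppose there exists a real number b < 1 such that ⌈ j·d_i − b ⌉ ≤ j·d_j for all integers i ≥ j ≥ 1 (the saturation condition). Then for every integer j ≥ 1 such that j·d is an integer, one has d_j = d, i.e. m_j = j·d. -/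
/-!
Passing from `i` to a multiple of `i` does not decrease `m i / i`, so the supremum `d` is approached
by slopes of arbitrarily large index. The ceiling function is left-continuous, so the saturation
inequality survives the limit: `⌈j * d - b⌉ ≤ m j ≤ j * d`. If `j * d` is an integer and `b < 1`,
then `⌈j * d - b⌉` is at least `j * d`, and equality holds throughout.
-/

/-- The set of slopes `d_i = m_i / i` of a sequence `m`. The index `0` is left out, since its
slope would be the junk value `m 0 / 0 = 0`. -/
def slopes {K : Type*} [DivisionRing K] (m : ℕ → K) : Set K :=
  {x | ∃ i : ℕ, 1 ≤ i ∧ x = m i / i}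

theorem nsmul_apply_le_apply_mul_of_superadditive {M : Type*} [AddMonoid M] [Preorder M]
    [AddRightMono M] {m : ℕ → M}
    (hsuper : ∀ i j : ℕ, 1 ≤ i → 1 ≤ j → m i + m j ≤ m (i + j))
    {i k : ℕ} (hi : 1 ≤ i) (hk : 1 ≤ k) : k • m i ≤ m (k * i) := by
  induction k, hk using Nat.le_induction with
  | base => rw [one_nsmul, one_mul]
  | succ k hk ih =>
    calc (k + 1) • m i = k • m i + m i := succ_nsmul _ _
      _ ≤ m (k * i) + m i := by gcongr
      _ ≤ m (k * i + i) := hsuper _ _ (Nat.mul_pos hk hi) hi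
      _ = m ((k + 1) * i) := by rw [Nat.succ_mul]

section Slopes

variable {K : Type*} [Field K] [LinearOrder K] [IsStrictOrderedRing K] {m : ℕ → K} {d : K} {j : ℕ}

theorem apply_le_mul_of_isLUB_slopes (hd : IsLUB (slopes m) d) (hj : 1 ≤ j) : m j ≤ j * d :=
  (div_le_iff₀' (Nat.cast_pos.mpr hj)).mp (hd.1 ⟨j, hj, rfl⟩)

theorem exists_ge_lt_apply_div_of_isLUB_slopes (hd : IsLUB (slopes m) d) (hj : 1 ≤ j)
    (hmul : ∀ i : ℕ, 1 ≤ i → j * m i ≤ m (j * i)) {c : K} (hc : c < d) :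
    ∃ i : ℕ, j ≤ i ∧ c < m i / i := by
  obtain ⟨_, ⟨i, hi, rfl⟩, hci⟩ := (lt_isLUB_iff hd).mp hc
  have hj_pos : (0 : K) < j := Nat.cast_pos.mpr hj
  refine ⟨j * i, Nat.le_mul_of_pos_right j hi, ?_⟩
  calc c < m i / i := hci
    _ = j * m i / (j * i) := (mul_div_mul_left _ _ hj_pos.ne').symm
    _ ≤ m (j * i) / (j * i) := by gcongr; exact hmul i hi
    _ = m (j * i) / (j * i : ℕ) := by rw [Nat.cast_mul]

variable [FloorRing K] {b : K}

theorem ceil_mul_sub_le_apply_of_isLUB_slopes (hd : IsLUB (slopes m) d) (hj : 1 ≤ j)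
    (hmul : ∀ i : ℕ, 1 ≤ i → j * m i ≤ m (j * i))
    (hsat : ∀ i : ℕ, j ≤ i → (⌈j * (m i / i) - b⌉ : K) ≤ m j) :
    (⌈j * d - b⌉ : K) ≤ m j := by
  have hj_pos : (0 : K) < j := Nat.cast_pos.mpr hj
  have hlt : (⌈j * d - b⌉ - 1 + b) / j < d := by
    rw [div_lt_iff₀' hj_pos]
    linarith [Int.ceil_lt_add_one (j * d - b)]
  obtain ⟨i, hji, hi⟩ := exists_ge_lt_apply_div_of_isLUB_slopes hd hj hmul hlt
  have hceil : ⌈j * d - b⌉ ≤ ⌈j * (m i / i) - b⌉ :=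
    Int.le_ceil_iff.mpr (lt_sub_iff_add_lt.mpr ((div_lt_iff₀' hj_pos).mp hi))
  exact (Int.cast_le.mpr hceil).trans (hsat i hji)

theorem apply_eq_of_mul_sup_integer_general (hd : IsLUB (slopes m) d) (hj : 1 ≤ j)
    (hmul : ∀ i : ℕ, 1 ≤ i → j * m i ≤ m (j * i)) (hb : b < 1)
    (hsat : ∀ i : ℕ, j ≤ i → (⌈j * (m i / i) - b⌉ : K) ≤ m j)
    (hint : ∃ n : ℤ, j * d = n) : m j = j * d := by
  obtain ⟨n, hn⟩ := hint
  refine le_antisymm (apply_le_mul_of_isLUB_slopes hd hj) ?_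
  have hceil : n ≤ ⌈j * d - b⌉ := by
    rw [hn, Int.le_ceil_iff]
    exact sub_lt_sub_left hb _
  calc j * d = n := hn
    _ ≤ ⌈j * d - b⌉ := Int.cast_le.mpr hceil
    _ ≤ m j := ceil_mul_sub_le_apply_of_isLUB_slopes hd hj hmul hsat

end Slopes

/-- Shokurov: an a-saturated adjoint algebra on an affine curve
stabilizes at divisible indices.
Let `m : ℕ → ℕ` be superadditive (`m i + m j ≤ m (i+j)` for `i, j ≥ 1`), set
`d_i := m_i / i ∈ ℝ` for `i ≥ 1`, assume `{d_i : i ≥ 1}` is bounded above, and let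
`d := sup_{i ≥ 1} d_i`.  Suppose there is a real number `b < 1` such that
`⌈ j·d_i − b ⌉ ≤ j·d_j` for all integers `i ≥ j ≥ 1` (the saturation condition).
Then for every integer `j ≥ 1` such that `j·d` is an integer, one has `d_j = d`,
i.e. `m_j = j·d`. -/
theorem apply_eq_of_mul_sup_integer
    (m : ℕ → ℕ)
    (hsuper : ∀ i j : ℕ, 1 ≤ i → 1 ≤ j → m i + m j ≤ m (i + j))
    (hbdd : BddAbove {x : ℝ | ∃ i : ℕ, 1 ≤ i ∧ x = (m i : ℝ) / (i : ℝ)})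
    (d : ℝ) (hd : d = sSup {x : ℝ | ∃ i : ℕ, 1 ≤ i ∧ x = (m i : ℝ) / (i : ℝ)})
    (b : ℝ) (hb : b < 1)
    (hsat : ∀ i j : ℕ, 1 ≤ j → j ≤ i →
      ((⌈(j : ℝ) * ((m i : ℝ) / (i : ℝ)) - b⌉ : ℤ) : ℝ) ≤ (j : ℝ) * ((m j : ℝ) / (j : ℝ))) :
    ∀ j : ℕ, 1 ≤ j → (∃ n : ℤ, (j : ℝ) * d = (n : ℝ)) → (m j : ℝ) = (j : ℝ) * d := by
  intro j hj hint
  have hlub : IsLUB (slopes fun i ↦ (m i : ℝ)) d := hd ▸ isLUB_csSup ⟨_, 1, le_rfl, rfl⟩ hbdd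
  refine apply_eq_of_mul_sup_integer_general hlub hj (fun i hi ↦ ?_) hb (fun i hi ↦ ?_) hint
  · exact_mod_cast nsmul_apply_le_apply_mul_of_superadditive hsuper hi hj
  · exact (hsat i j hj hi).trans_eq (mul_div_cancel₀ _ (Nat.cast_ne_zero.mpr (by lia)))
end

section
/- Let m : ℕ → ℕ be a superadditive sequence (m_{i+j} ≥ m_i + m_j for all i, j ≥ 1) with m_0 = 0, set d_i := m_i/i for i ≥ 1, assume {d_i : i ≥ 1} is bounded above, and suppose there exists a real number b < 1 such that ⌈ j·d_i − b ⌉ ≤ j·d_j for all integers i ≥ j ≥ 1. Consider the ring ℂ[x, x^{−1}, t] (Laurent polynomials in x with coefficients polynomial in t) and let R be the ℂ-subalgebra consisting of all elements ∑_i f_i(x)·t^i such that for every i, the Laurent polynomial x^{m_i}·f_i(x) is a polynomial in x (i.e. f_i lies in the ℂ-span of the powers x^n with n ≥ −m_i). Then R is a finitely generated ℂ-algebra. -/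
/-!
Superadditivity and the saturation inequality at fixed `j`, as `i → ∞`, trap `m j` between
`j * d - b` and `j * d`, where `d = lim m i / i` exists by Fekete's lemma. As `b < 1`, this says
`m j = ⌊j * d⌋` with fractional parts of `j * d` bounded away from `1`. The fractional parts of the
multiples of an irrational number are dense, so `d` is rational, and `m` is then additive in the
denominator `q` of `d`. Hence the monomials of degree at most `q` in `t` generate all the others.
-/

open Filter Topology LaurentPolynomial Polynomial

theorem exists_nat_fract_mul_mem_Ioo {d u v : ℝ} (hd : Irrational d) (hu : 0 ≤ u) (hv : v ≤ 1)
    (huv : u < v) : ∃ n : ℕ, Int.fract (n * d) ∈ Set.Ioo u v := by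
  have hdense : DenseRange fun n : ℕ => n • (d : UnitAddCircle) :=
    denseRange_zsmul_iff_nsmul.1 (AddCircle.denseRange_zsmul_coe_iff.2 (by simpa using hd))
  obtain ⟨n, y, hy, hny⟩ := hdense.exists_mem_open
    (QuotientAddGroup.isOpenMap_coe _ isOpen_Ioo) ((Set.nonempty_Ioo.2 huv).image _)
  have hfract : Int.fract ((n : ℝ) * d) = y := by
    have hy' : y ∈ Set.Ico (0 : ℝ) (0 + 1) := ⟨hu.trans hy.1.le, by linarith [hy.2]⟩
    refine (AddCircle.coe_eq_coe_iff_of_mem_Ico (a := 0) ?_ hy').1 ?_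
    · exact ⟨Int.fract_nonneg _, by simpa only [zero_add] using Int.fract_lt_one _⟩
    · rw [AddCircle.coe_fract, ← nsmul_eq_mul, AddCircle.coe_nsmul]
      exact hny.symm
  exact ⟨n, hfract ▸ hy⟩

theorem floor_add_den_mul (r x : ℚ) : ⌊(x + r.den) * r⌋ = ⌊x * r⌋ + ⌊r.den * r⌋ := by
  rw [add_mul, Rat.den_mul_eq_num, Int.floor_add_intCast, Int.floor_intCast]

section SaturatedSequences

variable {m : ℕ → ℤ} {b : ℝ}

/-- Asymptotic saturation of the divisors `m i • 0` on the affine line with respect to the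
saturating divisor `-b • 0`, expressed by the normalized multiplicities `m i / i`. -/
def IsAsymptoticallySaturated (m : ℕ → ℤ) (b : ℝ) : Prop :=
  ∀ i j : ℕ, 1 ≤ j → j ≤ i →
    ((⌈(j : ℝ) * ((m i : ℝ) / (i : ℝ)) - b⌉ : ℤ) : ℝ) ≤ (j : ℝ) * ((m j : ℝ) / (j : ℝ))

namespace IsAsymptoticallySaturated

theorem mul_div_sub_le (hsat : IsAsymptoticallySaturated m b) {i j : ℕ} (hj : 1 ≤ j)
    (hji : j ≤ i) : (j : ℝ) * (m i / i) - b ≤ m j := by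
  have hj0 : (j : ℝ) ≠ 0 := by positivity
  simpa only [mul_div_cancel₀ _ hj0] using (Int.le_ceil _).trans (hsat i j hj hji)

theorem exists_div_le_and_tendsto_div (hsat : IsAsymptoticallySaturated m b)
    (hsuper : ∀ i j : ℕ, m i + m j ≤ m (i + j)) :
    ∃ d : ℝ, (∀ j : ℕ, 1 ≤ j → (m j : ℝ) / j ≤ d) ∧
      Tendsto (fun i : ℕ => (m i : ℝ) / i) atTop (𝓝 d) := by
  have hsub : Subadditive fun i => -(m i : ℝ) := fun i j => by
    have : (m i : ℝ) + m j ≤ m (i + j) := mod_cast hsuper i j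
    linarith
  have hbdd : BddBelow (Set.range fun i : ℕ => -(m i : ℝ) / i) := by
    refine ⟨min 0 (-(m 1 + b)), ?_⟩
    rintro _ ⟨i, rfl⟩
    rcases i.eq_zero_or_pos with rfl | hi
    · simp
    · refine min_le_of_right_le ?_
      have := hsat.mul_div_sub_le le_rfl hi
      simp only [Nat.cast_one, one_mul, neg_div] at this ⊢
      linarith
  refine ⟨-hsub.lim, fun j hj => ?_, ?_⟩
  · have := hsub.lim_le_div hbdd (n := j) (by omega)
    rw [neg_div] at this
    linarith
  · simpa only [neg_div, neg_neg] using (hsub.tendsto_lim hbdd).neg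

theorem exists_eq_floor_and_fract_le (hsat : IsAsymptoticallySaturated m b) (hb : b < 1)
    (hsuper : ∀ i j : ℕ, m i + m j ≤ m (i + j)) :
    ∃ d : ℝ, ∀ j : ℕ, 1 ≤ j → m j = ⌊(j : ℝ) * d⌋ ∧ Int.fract ((j : ℝ) * d) ≤ b := by
  obtain ⟨d, hle, hlim⟩ := hsat.exists_div_le_and_tendsto_div hsuper
  refine ⟨d, fun j hj => ?_⟩
  have hupper : (m j : ℝ) ≤ j * d := (div_le_iff₀' (by positivity)).1 (hle j hj)
  have hlower : (j : ℝ) * d - b ≤ m j :=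
    le_of_tendsto ((hlim.const_mul (j : ℝ)).sub_const b)
      ((eventually_ge_atTop j).mono fun i hji => hsat.mul_div_sub_le hj hji)
  have hfloor : ⌊(j : ℝ) * d⌋ = m j := Int.floor_eq_iff.2 ⟨hupper, by linarith⟩
  refine ⟨hfloor.symm, ?_⟩
  rw [Int.fract, hfloor]
  linarith

theorem exists_rat_eq_floor (hsat : IsAsymptoticallySaturated m b) (hb : b < 1)
    (hm0 : m 0 = 0) (hsuper : ∀ i j : ℕ, m i + m j ≤ m (i + j)) :
    ∃ r : ℚ, ∀ j : ℕ, m j = ⌊(j : ℚ) * r⌋ := by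
  obtain ⟨d, hd⟩ := hsat.exists_eq_floor_and_fract_le hb hsuper
  have hb0 : 0 ≤ b := (Int.fract_nonneg _).trans (hd 1 le_rfl).2
  have hrat : ¬ Irrational d := fun hirr => by
    obtain ⟨n, hn, -⟩ := exists_nat_fract_mul_mem_Ioo hirr hb0 le_rfl hb
    rcases n.eq_zero_or_pos with rfl | hpos
    · simp [hb0.not_gt] at hn
    · exact hn.not_ge (hd n hpos).2
  obtain ⟨r, rfl⟩ := not_not.1 hrat
  refine ⟨r, fun j => ?_⟩
  rcases j.eq_zero_or_pos with rfl | hj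
  · simp [hm0]
  · rw [(hd j hj).1, ← Rat.floor_cast (α := ℝ)]
    push_cast
    rfl

end IsAsymptoticallySaturated

end SaturatedSequences

section AdjointAlgebra

variable (K : Type*) [CommSemiring K]

/-- The sections of `O(k • 0)` over the affine line: the Laurent polynomials whose pole at `0` has
order at most `k`. -/
noncomputable def poleOrderLE (k : ℤ) : Submodule K K[T;T⁻¹] :=
  Submodule.span K {g | ∃ n : ℤ, -k ≤ n ∧ g = T n}

variable {K}

theorem T_mem_poleOrderLE {k n : ℤ} (hn : -k ≤ n) : (T n : K[T;T⁻¹]) ∈ poleOrderLE K k :=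
  Submodule.subset_span ⟨n, hn, rfl⟩

theorem poleOrderLE_mono : Monotone (poleOrderLE K) := fun _ _ hkl =>
  Submodule.span_mono fun _ ⟨n, hn, hg⟩ => ⟨n, (neg_le_neg hkl).trans hn, hg⟩

theorem mul_mem_poleOrderLE {f g : K[T;T⁻¹]} {k l : ℤ} (hf : f ∈ poleOrderLE K k)
    (hg : g ∈ poleOrderLE K l) : f * g ∈ poleOrderLE K (k + l) := by
  have hle : poleOrderLE K k * poleOrderLE K l ≤ poleOrderLE K (k + l) := by
    rw [poleOrderLE, poleOrderLE, Submodule.span_mul_span, Submodule.span_le]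
    rintro _ ⟨_, ⟨i, hi, rfl⟩, _, ⟨j, hj, rfl⟩, rfl⟩
    simpa only [SetLike.mem_coe, ← T_add] using T_mem_poleOrderLE (by omega)
  exact hle (Submodule.mul_mem_mul hf hg)

variable (K) in
/-- The adjoint algebra `⨁ i, H⁰(𝔸¹, O(m i • 0)) tⁱ` of a superadditive sequence `m`, as a
subalgebra of `K[x, x⁻¹][t]`. -/
noncomputable def adjointAlgebra (m : ℕ → ℤ) (hm0 : m 0 = 0)
    (hsuper : ∀ i j : ℕ, m i + m j ≤ m (i + j)) : Subalgebra K K[T;T⁻¹][X] where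
  carrier := {p | ∀ i, p.coeff i ∈ poleOrderLE K (m i)}
  add_mem' hp hq i := by
    rw [coeff_add]
    exact add_mem (hp i) (hq i)
  mul_mem' {p q} hp hq i := by
    rw [coeff_mul]
    refine sum_mem fun ⟨k, l⟩ hkl => ?_
    rw [← Finset.HasAntidiagonal.mem_antidiagonal.1 hkl]
    exact poleOrderLE_mono (hsuper k l) (mul_mem_poleOrderLE (hp k) (hq l))
  algebraMap_mem' c i := by
    rw [Polynomial.algebraMap_apply, coeff_C]
    split_ifs with hi
    · rw [Algebra.algebraMap_eq_smul_one, ← T_zero]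
      exact Submodule.smul_mem _ c (T_mem_poleOrderLE (by simp [hi, hm0]))
    · exact zero_mem _

namespace adjointAlgebra

variable {m : ℕ → ℤ} {hm0 : m 0 = 0} {hsuper : ∀ i j : ℕ, m i + m j ≤ m (i + j)}

theorem monomial_T_mem {i : ℕ} {n : ℤ} (hn : -m i ≤ n) :
    monomial i (T n) ∈ adjointAlgebra K m hm0 hsuper := fun k => by
  rw [coeff_monomial]
  split_ifs with hik
  · exact T_mem_poleOrderLE (hik ▸ hn)
  · exact zero_mem _

theorem le_of_monomial_T_mem {A : Subalgebra K K[T;T⁻¹][X]}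
    (hA : ∀ (i : ℕ) (n : ℤ), -m i ≤ n → monomial i (T n) ∈ A) :
    adjointAlgebra K m hm0 hsuper ≤ A := by
  have hmonomial (i : ℕ) : poleOrderLE K (m i) ≤
      (Subalgebra.toSubmodule A).comap ((monomial i).restrictScalars K) := by
    refine Submodule.span_le.2 ?_
    rintro _ ⟨n, hn, rfl⟩
    exact hA i n hn
  intro p hp
  rw [p.as_sum_support]
  exact sum_mem fun i _ => hmonomial i (hp i)

end adjointAlgebra

variable (K) in
/-- The generators proposed for an adjoint algebra: the coordinate `x` and, in each degree `i ≤ q`,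
the section `x ^ (-m i) * t ^ i` of largest pole order. -/
noncomputable def polarMonomials (m : ℕ → ℤ) (q : ℕ) : Set K[T;T⁻¹][X] :=
  insert (monomial 0 (T 1)) ((fun i => monomial i (T (-m i))) '' Set.Iic q)

theorem finite_polarMonomials (m : ℕ → ℤ) (q : ℕ) : (polarMonomials K m q).Finite :=
  ((Set.finite_Iic q).image _).insert _

section Adjoin

variable {m : ℕ → ℤ} {q : ℕ}

theorem monomial_T_neg_mem_adjoin_polarMonomials (hq : 0 < q)
    (hadd : ∀ i, m (i + q) = m i + m q) (i : ℕ) :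
    monomial i (T (-m i)) ∈ Algebra.adjoin K (polarMonomials K m q) := by
  have hgen {i : ℕ} (hi : i ≤ q) :
      monomial i (T (-m i)) ∈ Algebra.adjoin K (polarMonomials K m q) :=
    Algebra.subset_adjoin (.inr ⟨i, hi, rfl⟩)
  induction i using Nat.strong_induction_on with
  | _ i ih =>
    rcases le_total i q with hi | hi
    · exact hgen hi
    · obtain ⟨k, rfl⟩ := Nat.exists_eq_add_of_le' hi
      rw [hadd, neg_add, T_add, ← monomial_mul_monomial]
      exact mul_mem (ih k (by omega)) (hgen le_rfl)

theorem monomial_T_mem_adjoin_polarMonomials (hq : 0 < q)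
    (hadd : ∀ i, m (i + q) = m i + m q) {i : ℕ} {n : ℤ} (hn : -m i ≤ n) :
    monomial i (T n) ∈ Algebra.adjoin K (polarMonomials K m q) := by
  obtain ⟨k, hk⟩ := Int.le.dest hn
  have hx : monomial 0 (T 1) ∈ Algebra.adjoin K (polarMonomials K m q) :=
    Algebra.subset_adjoin (.inl rfl)
  have hsplit : (monomial i (T n) : K[T;T⁻¹][X]) =
      monomial 0 (T 1) ^ k * monomial i (T (-m i)) := by
    rw [monomial_pow, monomial_mul_monomial, T_pow, ← T_add, zero_mul, zero_add, mul_one, ← hk,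
      add_comm]
  rw [hsplit]
  exact mul_mem (pow_mem hx k) (monomial_T_neg_mem_adjoin_polarMonomials hq hadd i)

theorem adjoin_polarMonomials (hm0 : m 0 = 0) (hsuper : ∀ i j : ℕ, m i + m j ≤ m (i + j))
    (hq : 0 < q) (hadd : ∀ i, m (i + q) = m i + m q) :
    Algebra.adjoin K (polarMonomials K m q) = adjointAlgebra K m hm0 hsuper := by
  refine le_antisymm (Algebra.adjoin_le ?_) (adjointAlgebra.le_of_monomial_T_mem fun _ _ hn =>
    monomial_T_mem_adjoin_polarMonomials hq hadd hn)
  rintro _ (rfl | ⟨i, -, rfl⟩)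
  · exact adjointAlgebra.monomial_T_mem (by omega)
  · exact adjointAlgebra.monomial_T_mem le_rfl

end Adjoin

end AdjointAlgebra

theorem adjoint_algebra_on_affine_line_fg_general {K : Type*} [CommSemiring K] {m : ℕ → ℤ}
    (hm0 : m 0 = 0) (hsuper : ∀ i j : ℕ, m i + m j ≤ m (i + j)) {b : ℝ} (hb : b < 1)
    (hsat : IsAsymptoticallySaturated m b) : (adjointAlgebra K m hm0 hsuper).FG := by
  obtain ⟨r, hr⟩ := hsat.exists_rat_eq_floor hb hm0 hsuper
  have hadd (i : ℕ) : m (i + r.den) = m i + m r.den := by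
    simpa only [hr, Nat.cast_add] using floor_add_den_mul r i
  exact Subalgebra.fg_def.2
    ⟨polarMonomials K m r.den, finite_polarMonomials m r.den,
      adjoin_polarMonomials hm0 hsuper r.den_pos hadd⟩

/-- Shokurov: an a-saturated adjoint algebra on an affine curve is
finitely generated, made explicit on 𝔸¹.
Let `m : ℕ → ℕ` be superadditive with `m 0 = 0`, set `d_i := m_i / i` for `i ≥ 1`,
assume `{d_i : i ≥ 1}` is bounded above, and suppose there is a real number `b < 1`
with `⌈ j·d_i − b ⌉ ≤ j·d_j` for all `i ≥ j ≥ 1` (the saturation condition).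
Consider the ring `ℂ[x, x⁻¹, t]`, formalized as polynomials in `t` with Laurent
polynomial coefficients, `Polynomial (LaurentPolynomial ℂ)`, and let `R` be the
ℂ-subalgebra consisting of all elements `∑ᵢ fᵢ(x)·tⁱ` such that for every `i` the
coefficient `fᵢ` lies in the ℂ-span of the powers `xⁿ = T n` with `n ≥ −mᵢ`
(equivalently, `x^{mᵢ}·fᵢ(x)` is a polynomial in `x`).  Then `R` is a finitely
generated ℂ-algebra. -/
theorem adjoint_algebra_on_affine_line_fg
    (m : ℕ → ℕ) (hm0 : m 0 = 0)
    (hsuper : ∀ i j : ℕ, 1 ≤ i → 1 ≤ j → m i + m j ≤ m (i + j))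
    (hbdd : BddAbove {x : ℝ | ∃ i : ℕ, 1 ≤ i ∧ x = (m i : ℝ) / (i : ℝ)})
    (b : ℝ) (hb : b < 1)
    (hsat : ∀ i j : ℕ, 1 ≤ j → j ≤ i →
      ((⌈(j : ℝ) * ((m i : ℝ) / (i : ℝ)) - b⌉ : ℤ) : ℝ) ≤ (j : ℝ) * ((m j : ℝ) / (j : ℝ)))
    (R : Subalgebra ℂ (Polynomial (LaurentPolynomial ℂ)))
    (hR : (R : Set (Polynomial (LaurentPolynomial ℂ))) =
      {p | ∀ i : ℕ, p.coeff i ∈ Submodule.span ℂ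
        {g : LaurentPolynomial ℂ | ∃ n : ℤ, -(m i : ℤ) ≤ n ∧ g = LaurentPolynomial.T n}}) :
    R.FG := by
  have hsuper' (i j : ℕ) : (m i : ℤ) + m j ≤ m (i + j) := by
    rcases i.eq_zero_or_pos with rfl | hi
    · simp [hm0]
    rcases j.eq_zero_or_pos with rfl | hj
    · simp [hm0]
    exact_mod_cast hsuper i j hi hj
  have hR' : R = adjointAlgebra ℂ (fun i => (m i : ℤ)) (mod_cast hm0) hsuper' :=
    SetLike.coe_injective hR
  exact hR' ▸ adjoint_algebra_on_affine_line_fg_general _ _ hb <| by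
    simpa only [IsAsymptoticallySaturated, Int.cast_natCast] using hsat
end
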